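/- arXiv:2308.08080 — 4 statements merged into one kernel-verified Lean document; each statement's English description precedes it below -/
import Mathlib

section
/- Let 𝒯 be a triangulated category admitting all small coproducts, equipped with a monoidal structure, and let E be an object of 𝒯 such that the endofunctor (−) ⊗ E is exact (commutes with the shift and sends distinguished triangles to distinguished triangles) and preserves small coproducts. Then for every object G of 𝒯 and every j ≥ 0, if T belongs to ⟨G⟩̄_j then T ⊗ E belongs to ⟨G ⊗ E⟩̄_j. -/
/-!
Write `F` for the exact, coproduct-preserving functor of tensoring with `E`. The objects
that `F` sends into `⟨F G⟩̄₁` contain `G` and are closed under shifts, small coproducts and direct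
summands, because `F` commutes with each of these operations up to isomorphism; by minimality they
contain all of `⟨G⟩̄₁`. The higher levels follow by induction, since `F` maps a triangle witnessing
`X ∈ ⟨G⟩̄ₙ` to one witnessing `F X ∈ ⟨F G⟩̄ₙ`.
-/

open CategoryTheory Limits Pretriangulated MonoidalCategory

universe v u v₂ u₂

namespace Stmt

variable {C : Type u} [Category.{v} C]

/-- `X` is a retract (direct summand) of `Y`. -/
def IsRetract (X Y : C) : Prop := ∃ (i : X ⟶ Y) (p : Y ⟶ X), i ≫ p = 𝟙 X

section Big

variable [HasZeroObject C] [Preadditive C] [HasShift C ℤ]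
  [∀ n : ℤ, (shiftFunctor C n).Additive] [Pretriangulated C]

/-- The objects of `⟨G⟩̄₁`: the smallest collection of objects containing `G` that is
closed under shifts, arbitrary small coproducts, and direct summands (retracts). -/
def bigOne (G : C) : Set C :=
  ⋂₀ {S : Set C | G ∈ S ∧ (∀ X ∈ S, ∀ n : ℤ, (X⟦n⟧ : C) ∈ S) ∧
      (∀ (ι : Type v) (f : ι → C) (_ : HasCoproduct f), (∀ i, f i ∈ S) → (∐ f) ∈ S) ∧
      (∀ X Y : C, Y ∈ S → IsRetract X Y → X ∈ S)}

/-- The objects of `⟨G⟩̄ₙ`: `⟨G⟩̄₀` consists of the objects isomorphic to `0`;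
`⟨G⟩̄₁` is `bigOne G`; for `n ≥ 2`, `⟨G⟩̄ₙ` consists of the direct summands of objects `E`
fitting in a distinguished triangle `A ⟶ E ⟶ B ⟶ A⟦1⟧` with `A ∈ ⟨G⟩̄ₙ₋₁` and `B ∈ ⟨G⟩̄₁`. -/
def bigLevel (G : C) : ℕ → Set C
  | 0 => {X | IsZero X}
  | 1 => bigOne G
  | (n + 2) => {X | ∃ (E A B : C) (f : A ⟶ E) (g : E ⟶ B) (h : B ⟶ A⟦(1 : ℤ)⟧),
      (Triangle.mk f g h ∈ distTriang C) ∧ A ∈ bigLevel G (n + 1) ∧ B ∈ bigOne G ∧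
      IsRetract X E}

end Big

section Retract

variable {D : Type u₂} [Category.{v₂} D]

lemma IsRetract.of_iso {X Y : C} (e : X ≅ Y) : IsRetract X Y :=
  ⟨e.hom, e.inv, e.hom_inv_id⟩

lemma IsRetract.map {X Y : C} (h : IsRetract X Y) (F : C ⥤ D) :
    IsRetract (F.obj X) (F.obj Y) := by
  obtain ⟨i, p, hip⟩ := h
  exact ⟨F.map i, F.map p, by rw [← F.map_comp, hip, F.map_id]⟩

end Retract

section LevelOne

variable [HasShift C ℤ] {G X Y : C}

lemma self_mem_bigOne (G : C) : G ∈ bigOne G :=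
  fun _ hS ↦ hS.1

lemma shift_mem_bigOne (hX : X ∈ bigOne G) (n : ℤ) : (X⟦n⟧ : C) ∈ bigOne G :=
  fun S hS ↦ hS.2.1 X (hX S hS) n

lemma coproduct_mem_bigOne {ι : Type v} (f : ι → C) [HasCoproduct f]
    (hf : ∀ i, f i ∈ bigOne G) : (∐ f) ∈ bigOne G :=
  fun S hS ↦ hS.2.2.1 ι f inferInstance fun i ↦ hf i S hS

lemma mem_bigOne_of_isRetract (h : IsRetract X Y) (hY : Y ∈ bigOne G) : X ∈ bigOne G :=
  fun S hS ↦ hS.2.2.2 X Y (hY S hS) h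

lemma mem_bigOne_of_iso (e : X ≅ Y) (hY : Y ∈ bigOne G) : X ∈ bigOne G :=
  mem_bigOne_of_isRetract (.of_iso e) hY

@[elab_as_elim]
lemma bigOne_induction {P : ∀ X : C, X ∈ bigOne G → Prop}
    (self : P G (self_mem_bigOne G))
    (shift : ∀ (X : C) (n : ℤ) (hX : X ∈ bigOne G), P X hX → P (X⟦n⟧) (shift_mem_bigOne hX n))
    (coproduct : ∀ (ι : Type v) (f : ι → C) [HasCoproduct f] (hf : ∀ i, f i ∈ bigOne G),
      (∀ i, P (f i) (hf i)) → P (∐ f) (coproduct_mem_bigOne f hf))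
    (retract : ∀ (X Y : C) (h : IsRetract X Y) (hY : Y ∈ bigOne G),
      P Y hY → P X (mem_bigOne_of_isRetract h hY))
    (hX : X ∈ bigOne G) : P X hX := by
  obtain ⟨_, h⟩ : X ∈ {Y | ∃ hY : Y ∈ bigOne G, P Y hY} :=
    hX _ ⟨⟨_, self⟩, fun Y ⟨hY, h⟩ n ↦ ⟨_, shift Y n hY h⟩,
      fun ι f _ hf ↦ ⟨_, coproduct ι f (fun i ↦ (hf i).1) fun i ↦ (hf i).2⟩,
      fun Y Z ⟨hZ, h⟩ hYZ ↦ ⟨_, retract Y Z hYZ hZ h⟩⟩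
  exact h

end LevelOne

section Functoriality

variable {D : Type u₂} [Category.{v} D] [HasShift C ℤ] [HasShift D ℤ]
  (F : C ⥤ D) [F.CommShift ℤ] [∀ J : Type v, PreservesColimitsOfShape (Discrete J) F]

lemma map_mem_bigOne {G X : C} (hX : X ∈ bigOne G) : F.obj X ∈ bigOne (F.obj G) := by
  induction hX using bigOne_induction with
  | self => exact self_mem_bigOne (F.obj G)
  | shift X n _ ih => exact mem_bigOne_of_iso ((F.commShiftIso n).app X) (shift_mem_bigOne ih n)
  | coproduct ι f _ ih =>
    have : HasCoproduct fun i ↦ F.obj (f i) :=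
      ⟨_, isColimitCofanMkObjOfIsColimit F _ _ (coproductIsCoproduct f)⟩
    exact mem_bigOne_of_iso (PreservesCoproduct.iso F f) (coproduct_mem_bigOne _ ih)
  | retract X Y h _ ih => exact mem_bigOne_of_isRetract (h.map F) ih

theorem statement0_general
    [HasZeroObject C] [Preadditive C] [∀ n : ℤ, (shiftFunctor C n).Additive] [Pretriangulated C]
    [HasZeroObject D] [Preadditive D] [∀ n : ℤ, (shiftFunctor D n).Additive] [Pretriangulated D]
    [F.IsTriangulated] (G : C) :
    ∀ (j : ℕ) (X : C), X ∈ bigLevel G j → F.obj X ∈ bigLevel (F.obj G) j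
  | 0, _, hX => F.map_isZero hX
  | 1, _, hX => map_mem_bigOne F hX
  | n + 2, _, ⟨_, A, _, _, _, _, hT, hA, hB, hX⟩ =>
    ⟨_, _, _, _, _, _, F.map_distinguished _ hT, statement0_general G (n + 1) A hA,
      map_mem_bigOne F hB, hX.map F⟩

end Functoriality

/--
in a triangulated category with all small coproducts, equipped with a
monoidal structure, if the endofunctor `(-) ⊗ E` is exact (i.e. commutes with shift and
sends distinguished triangles to distinguished triangles) and preserves small coproducts,
then `T ∈ ⟨G⟩̄ⱼ` implies `T ⊗ E ∈ ⟨G ⊗ E⟩̄ⱼ`.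
-/
theorem statement0 [HasZeroObject C] [Preadditive C] [HasShift C ℤ]
    [∀ n : ℤ, (shiftFunctor C n).Additive] [Pretriangulated C]
    [HasCoproducts.{v} C] [MonoidalCategory C]
    (E : C) [(tensorRight E).CommShift ℤ] [(tensorRight E).IsTriangulated]
    [∀ J : Type v, PreservesColimitsOfShape (Discrete J) (tensorRight E)]
    (G : C) (j : ℕ) (T : C) (hT : T ∈ bigLevel G j) :
    T ⊗ E ∈ bigLevel (G ⊗ E) j :=
  statement0_general (tensorRight E) G j T hT

end Stmt
end

section
/- Let 𝒯 be a triangulated category admitting all small coproducts and let E, G be objects of 𝒯. If E belongs to ⟨G⟩̄_n, then for every j ≥ 0 the subcategory ⟨E⟩̄_j is contained in ⟨G⟩̄_{jn}. -/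
/-!
A `G`-ghost is a morphism killed by every map from a shift of `G`. An object lies in `⟨G⟩̄ₘ` exactly
when every composite of `m` `G`-ghosts out of it vanishes. Hence `E ∈ ⟨G⟩̄ₙ` forces composites of
`n` `G`-ghosts to be `E`-ghosts. A composite of `jn` `G`-ghosts is then a composite of `j`
`E`-ghosts, so it vanishes on `⟨E⟩̄ⱼ`, which therefore lies in `⟨G⟩̄_{jn}`.

The characterization of `⟨G⟩̄ₘ` is an induction on `m`, in terms of Christensen's projective
classes: pairs of a class of objects and a class of morphisms orthogonal to each other, for which
extensions on the object side correspond to composites on the morphism side. The usual proof of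
this correspondence, like the direct proof of the theorem by associativity of extensions, uses the
octahedral axiom, which is not part of `Pretriangulated`. Weak pushouts suffice once the triangle in
the definition of a projective class is weakened to a factorization property.
-/

/-!
STATEMENT 1: Let 𝒯 be a triangulated category admitting all small coproducts and
let E, G be objects of 𝒯. If E belongs to ⟨G⟩̄_n, then for every j ≥ 0 the
subcategory ⟨E⟩̄_j is contained in ⟨G⟩̄_{jn}.
-/

open CategoryTheory Limits Pretriangulated

universe v u

namespace Stmt

variable {C : Type u} [Category.{v} C]

variable [HasZeroObject C] [Preadditive C] [HasShift C ℤ]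
  [∀ n : ℤ, (shiftFunctor C n).Additive] [Pretriangulated C]

section Powers

variable {D : Type*} [Category* D]

/-- The class of composites of `n` morphisms of `I`, preceded by an arbitrary morphism. The latter
makes the zeroth power the class of all morphisms, as for the powers of an ideal. -/
def power (I : MorphismProperty D) : ℕ → MorphismProperty D
  | 0 => ⊤
  | n + 1 => (power I n).comp I

theorem power_add_le (I : MorphismProperty D) (m n : ℕ) :
    power I (m + n) ≤ (power I m).comp (power I n) := by
  induction n with
  | zero => exact fun X Y f hf => ⟨⟨Y, f, 𝟙 Y, Category.comp_id f, hf, trivial⟩⟩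
  | succ n ih =>
    rintro X Y f ⟨φ⟩
    obtain ⟨ψ⟩ := ih _ φ.hi
    have tail : power I (n + 1) (ψ.p ≫ φ.p) := ⟨⟨φ.Z, ψ.p, φ.p, rfl, ψ.hp, φ.hp⟩⟩
    exact ⟨⟨ψ.Z, ψ.i, ψ.p ≫ φ.p, by rw [ψ.fac_assoc, φ.fac], ψ.hi, tail⟩⟩

theorem power_mul_le {I J : MorphismProperty D} {n : ℕ} (h : power I n ≤ J) (j : ℕ) :
    power I (j * n) ≤ power J j := by
  induction j with
  | zero => exact le_top
  | succ j ih =>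
    intro X Y f hf
    obtain ⟨φ⟩ := power_add_le I (j * n) n f (Nat.succ_mul j n ▸ hf)
    exact ⟨⟨φ.Z, φ.i, φ.p, φ.fac, ih _ φ.hi, h _ φ.hp⟩⟩

end Powers

section Orthogonality

variable {D : Type*} [Category* D] [HasZeroMorphisms D]

/-- The morphisms `f` such that `a ≫ f = 0` for every map `a` from an object of `P`. -/
def nullMorphisms (P : ObjectProperty D) : MorphismProperty D :=
  fun X _ f => ∀ ⦃W : D⦄, P W → ∀ a : W ⟶ X, a ≫ f = 0

/-- The objects `W` such that `a ≫ f = 0` for every map `a` from `W` and every `f` in `I`. -/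
def projectives (I : MorphismProperty D) : ObjectProperty D :=
  fun W => ∀ ⦃X Y : D⦄ (f : X ⟶ Y), I f → ∀ a : W ⟶ X, a ≫ f = 0

theorem le_projectives_nullMorphisms (P : ObjectProperty D) : P ≤ projectives (nullMorphisms P) :=
  fun _ hW _ _ _ hf a => hf hW a

theorem projectives_antitone {I J : MorphismProperty D} (h : I ≤ J) :
    projectives J ≤ projectives I :=
  fun _ hW _ _ f hf a => hW f (h f hf) a

instance (I : MorphismProperty D) : (projectives I).IsStableUnderRetracts where
  of_retract r hY _ _ f hf a := by
    rw [← Category.id_comp a, ← r.retract, Category.assoc, Category.assoc, ← Category.assoc r.r,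
      hY f hf, comp_zero]

instance (I : MorphismProperty D) (K : Type*) [Category* K] :
    (projectives I).IsClosedUnderColimitsOfShape K where
  colimitsOfShape_le := by
    rintro W ⟨φ⟩ X Y f hf a
    refine φ.isColimit.hom_ext fun k => ?_
    rw [comp_zero, ← Category.assoc]
    exact φ.prop_diag_obj k f hf _

variable {A : Type*} [AddGroup A] [HasShift D A]

instance (P : ObjectProperty D) [P.IsStableUnderShift A] :
    (nullMorphisms P).IsCompatibleWithShift A where
  condition n := by
    ext X Y f
    refine ⟨fun hf W hW a => (shiftFunctor D n).map_injective ?_, fun hf W hW a => ?_⟩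
    · rw [Functor.map_comp, Functor.map_zero]
      exact hf (P.le_shift n W hW) _
    · obtain ⟨b, hb⟩ := (shiftFunctor D n).map_surjective ((shiftNegShift W n).hom ≫ a)
      rw [← Iso.inv_hom_id_assoc (shiftNegShift W n) a, ← hb, Category.assoc, ← Functor.map_comp,
        hf (P.le_shift (-n) W hW) b, Functor.map_zero, comp_zero]

instance (I : MorphismProperty D) [I.IsCompatibleWithShift A] :
    (projectives I).IsStableUnderShift A where
  isStableUnderShiftBy n := .mk fun W hW X Y f hf a => (shiftFunctor D (-n)).map_injective <| by
    rw [Functor.map_comp, Functor.map_zero,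
      ← Iso.hom_inv_id_assoc (shiftShiftNeg W n) (a⟦-n⟧'), Category.assoc,
      hW _ ((MorphismProperty.IsCompatibleWithShift.iff I f (-n)).2 hf), comp_zero]

/-- The `G`-ghosts: the morphisms killed by precomposition with every map from a shift of `G`. -/
def ghosts [HasShift D ℤ] (G : D) : MorphismProperty D :=
  nullMorphisms ((ObjectProperty.singleton G).shiftClosure ℤ)

end Orthogonality

section ProjectiveClass

open scoped ZeroObject

variable {D : Type*} [Category* D]

/-- A pair of a class `P` of objects and a class `I` of morphisms is a projective class if `P` is
stable under direct summands, maps from objects of `P` kill `I`, and every object `X` is the source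
of some `f` in `I` such that all morphisms killed by `f` factor through objects of `P`.
Christensen's definition asks for the fibre of `f` to be in `P`; the factorization property is the
form that passes to extensions without the octahedral axiom. -/
structure IsProjectiveClass [HasZeroMorphisms D] (P : ObjectProperty D) (I : MorphismProperty D) :
    Prop where
  isStableUnderRetracts : P.IsStableUnderRetracts
  le_projectives : P ≤ projectives I
  exists_factorization : ∀ X : D, ∃ (Y : D) (f : X ⟶ Y), I f ∧ ∀ ⦃Z : D⦄ (g : Z ⟶ X), g ≫ f = 0 →
    ∃ (W : D) (s : Z ⟶ W) (t : W ⟶ X), P W ∧ s ≫ t = g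

theorem IsProjectiveClass.projectives_eq [HasZeroMorphisms D] {P : ObjectProperty D}
    {I : MorphismProperty D} (h : IsProjectiveClass P I) : projectives I = P := by
  refine le_antisymm (fun X hX => ?_) h.le_projectives
  obtain ⟨Y, f, hf, factor⟩ := h.exists_factorization X
  obtain ⟨W, s, t, hW, hst⟩ := factor (𝟙 X) (hX f hf _)
  exact h.isStableUnderRetracts.of_retract ⟨s, t, hst⟩ hW

theorem isProjectiveClass_isZero_top [HasZeroMorphisms D] [HasZeroObject D] :
    IsProjectiveClass (fun X : D => IsZero X) ⊤ where
  isStableUnderRetracts := ⟨fun r hY => (IsZero.iff_id_eq_zero _).2 <| by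
    rw [← r.retract, hY.eq_of_tgt r.i 0, zero_comp]⟩
  le_projectives _ hW _ _ _ _ _ := hW.eq_of_src _ _
  exists_factorization X := ⟨X, 𝟙 X, trivial, fun Z g hg =>
    ⟨0, 0, 0, isZero_zero D, zero_comp.trans (hg.symm.trans (Category.comp_id g))⟩⟩

variable [HasZeroObject D] [Preadditive D] [HasShift D ℤ] [∀ n : ℤ, (shiftFunctor D n).Additive]
  [Pretriangulated D]

theorem isProjectiveClass_nullMorphisms {P S : ObjectProperty D} [P.IsStableUnderRetracts]
    (hP : P ≤ projectives (nullMorphisms S))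
    (cover : ∀ X : D, ∃ (W : D) (p : W ⟶ X), P W ∧
      ∀ ⦃V : D⦄, S V → ∀ a : V ⟶ X, ∃ b : V ⟶ W, b ≫ p = a) :
    IsProjectiveClass P (nullMorphisms S) where
  isStableUnderRetracts := inferInstance
  le_projectives := hP
  exists_factorization X := by
    obtain ⟨W, p, hW, lift⟩ := cover X
    obtain ⟨Y, q, r, hT⟩ := distinguished_cocone_triangle p
    have hpq : p ≫ q = 0 := comp_distTriang_mor_zero₁₂ _ hT
    refine ⟨Y, q, fun V hV a => ?_, fun Z g hg => ?_⟩
    · obtain ⟨b, rfl⟩ := lift hV a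
      rw [Category.assoc, hpq, comp_zero]
    · obtain ⟨s, hs⟩ := Triangle.coyoneda_exact₂ _ hT g hg
      exact ⟨W, s, p, hW, hs.symm⟩

theorem exists_extension_of_mor₃_comp_eq_zero {T : Triangle D} (hT : T ∈ distTriang D) {Y : D}
    (t : T.obj₁ ⟶ Y) (ht : T.mor₃ ≫ t⟦(1 : ℤ)⟧' = 0) : ∃ u : T.obj₂ ⟶ Y, T.mor₁ ≫ u = t := by
  obtain ⟨u, hu, -⟩ := complete_distinguished_triangle_morphism₂ _ _ hT
    (contractible_distinguished Y) t 0 (ht.trans zero_comp.symm)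
  exact ⟨u, hu.trans (Category.comp_id t)⟩

theorem exists_weakPushout {T : Triangle D} (hT : T ∈ distTriang D) {B : D} (s : T.obj₁ ⟶ B) :
    ∃ (W : D) (f : B ⟶ W) (e : W ⟶ T.obj₃) (w : T.obj₂ ⟶ W),
      Triangle.mk f e (T.mor₃ ≫ s⟦(1 : ℤ)⟧') ∈ distTriang D ∧ T.mor₁ ≫ w = s ≫ f ∧
      ∀ ⦃Y : D⦄ (t : B ⟶ Y) (g : T.obj₂ ⟶ Y), s ≫ t = T.mor₁ ≫ g →
        ∃ u : W ⟶ Y, f ≫ u = t ∧ w ≫ u = g := by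
  obtain ⟨W, f, e, hW⟩ := distinguished_cocone_triangle₂ (T.mor₃ ≫ s⟦(1 : ℤ)⟧')
  obtain ⟨w, hw, he⟩ : ∃ w : T.obj₂ ⟶ W, T.mor₁ ≫ w = s ≫ f ∧ T.mor₂ ≫ 𝟙 T.obj₃ = w ≫ e :=
    complete_distinguished_triangle_morphism₂ _ _ hT hW s (𝟙 T.obj₃) (Category.id_comp _).symm
  have hfe : f ≫ e = 0 := comp_distTriang_mor_zero₁₂ _ hW
  refine ⟨W, f, e, w, hW, hw, fun Y t g hst => ?_⟩
  obtain ⟨u, hu⟩ : ∃ u : W ⟶ Y, f ≫ u = t := exists_extension_of_mor₃_comp_eq_zero hW t <|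
    show (T.mor₃ ≫ s⟦(1 : ℤ)⟧') ≫ t⟦(1 : ℤ)⟧' = 0 by
      rw [Category.assoc, ← Functor.map_comp, hst, Functor.map_comp, ← Category.assoc,
        comp_distTriang_mor_zero₃₁ T hT, zero_comp]
  -- `g` and `w ≫ u` agree on `T.obj₁`, so their difference factors through `T.mor₂ = w ≫ e`.
  obtain ⟨d, hd⟩ : ∃ d : T.obj₃ ⟶ Y, g - w ≫ u = T.mor₂ ≫ d :=
    Triangle.yoneda_exact₂ T hT (g - w ≫ u) <| by
      rw [Preadditive.comp_sub, ← Category.assoc, hw, Category.assoc, hu, hst, sub_self]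
  refine ⟨u + e ≫ d, ?_, ?_⟩
  · rw [Preadditive.comp_add, hu, ← Category.assoc, hfe, zero_comp, add_zero]
  · rw [Preadditive.comp_add, ← Category.assoc, ← he, Category.comp_id, ← hd, add_sub_cancel]

theorem extensionProduct_projectives_le (I J : MorphismProperty D) :
    (projectives I).extensionProduct (projectives J) ≤ projectives (I.comp J) := by
  rintro W ⟨A, B, f, g, h, hT, hA, hB⟩ X Y _ ⟨φ⟩ a
  obtain ⟨c, hc⟩ : ∃ c : B ⟶ φ.Z, a ≫ φ.i = g ≫ c :=
    Triangle.yoneda_exact₂ _ hT (a ≫ φ.i) ((Category.assoc _ _ _).symm.trans (hA φ.i φ.hi (f ≫ a)))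
  rw [← φ.fac, ← Category.assoc, hc, Category.assoc, hB φ.p φ.hp, comp_zero]

theorem extensionProduct_isZero_left (Q : ObjectProperty D) [Q.IsClosedUnderIsomorphisms] :
    ObjectProperty.extensionProduct (fun X : D => IsZero X) Q = Q := by
  refine le_antisymm ?_ ?_
  · rintro W ⟨A, B, f, g, h, hT, hA, hB⟩
    have : IsIso g := (Triangle.isZero₁_iff_isIso₂ _ hT).1 hA
    exact Q.prop_of_iso (asIso g).symm hB
  · have : ObjectProperty.ContainsZero (fun X : D => IsZero X) := ⟨0, isZero_zero D, isZero_zero D⟩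
    exact ObjectProperty.le_extensionProduct_right _

theorem IsProjectiveClass.comp {P Q : ObjectProperty D} {I J : MorphismProperty D}
    (hP : IsProjectiveClass P I) (hQ : IsProjectiveClass Q J) :
    IsProjectiveClass (P.extensionProduct Q).retractClosure (I.comp J) where
  isStableUnderRetracts := inferInstance
  le_projectives := by
    rw [ObjectProperty.retractClosure_le_iff, ← hP.projectives_eq, ← hQ.projectives_eq]
    exact extensionProduct_projectives_le I J
  exists_factorization X := by
    obtain ⟨Y, h, hh, factorP⟩ := hP.exists_factorization X
    obtain ⟨Y', q, hq, factorQ⟩ := hQ.exists_factorization Y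
    refine ⟨Y', h ≫ q, ⟨⟨Y, h, q, rfl, hh, hq⟩⟩, fun Z g hg => ?_⟩
    obtain ⟨B, b, p, hB, hbp⟩ := factorQ (g ≫ h) ((Category.assoc _ _ _).trans hg)
    -- `h` kills `g` on the fibre of `b`, where `g` therefore factors through an object of `P`.
    obtain ⟨F, k, l, hT⟩ := distinguished_cocone_triangle₁ b
    have hkb : k ≫ b = 0 := comp_distTriang_mor_zero₁₂ _ hT
    obtain ⟨A, s, t, hA, hst⟩ := factorP (k ≫ g) <| by
      rw [Category.assoc, ← hbp, ← Category.assoc, hkb, zero_comp]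
    obtain ⟨W, f, e, w, hW, -, desc⟩ := exists_weakPushout hT s
    obtain ⟨u, -, hu⟩ := desc t g hst
    exact ⟨W, w, u, ObjectProperty.le_retractClosure _ _ ⟨A, B, f, e, _, hW, hA, hB⟩, hu⟩

end ProjectiveClass

theorem exists_coproduct_cover {D : Type u} [Category.{v} D] [HasCoproducts.{v} D] {ι : Type v}
    (F : ι → D) (X : D) : ∃ (κ : Type v) (k : κ → ι) (p : (∐ fun x => F (k x)) ⟶ X),
      ∀ (i : ι) (a : F i ⟶ X), ∃ b : F i ⟶ ∐ fun x => F (k x), b ≫ p = a :=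
  ⟨Σ i, (F i ⟶ X), Sigma.fst, Sigma.desc Sigma.snd, fun i a =>
    ⟨Sigma.ι (fun x : Σ i, (F i ⟶ X) => F x.1) ⟨i, a⟩, Sigma.ι_desc _ _⟩⟩

/-- `⟨G⟩̄ₙ` as a property of objects. -/
def level (G : C) (n : ℕ) : ObjectProperty C := fun X => X ∈ bigLevel G n

theorem level_one_self (G : C) : level G 1 G := fun _ hS => hS.1

instance (G : C) : (level G 1).IsStableUnderRetracts where
  of_retract r hY S hS := hS.2.2.2 _ _ (hY S hS) ⟨r.i, r.r, r.retract⟩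

instance (G : C) : (level G 1).IsStableUnderShift ℤ where
  isStableUnderShiftBy n := .mk fun X hX S hS => hS.2.1 X (hX S hS) n

theorem level_one_coproduct {G : C} {ι : Type v} (f : ι → C) [hf : HasCoproduct f]
    (h : ∀ i, level G 1 (f i)) : level G 1 (∐ f) :=
  fun S hS => hS.2.2.1 ι f hf fun i => h i S hS

theorem level_one_le {G : C} {P : ObjectProperty C} [P.IsStableUnderRetracts]
    [P.IsStableUnderShift ℤ] [∀ ι : Type v, P.IsClosedUnderColimitsOfShape (Discrete ι)]
    (hG : P G) : level G 1 ≤ P :=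
  fun _ hX => hX {X | P X} ⟨hG, fun X hX n => P.le_shift n X hX,
    fun _ f _ hf => P.prop_colimit (Discrete.functor f) fun i => hf i.as,
    fun _ _ hY ⟨i, p, hip⟩ => P.prop_of_retract ⟨i, p, hip⟩ hY⟩

theorem level_succ (G : C) (n : ℕ) :
    level G (n + 1) = ((level G n).extensionProduct (level G 1)).retractClosure := by
  cases n with
  | zero =>
    calc
      level G 1 = (level G 1).retractClosure := (level G 1).retractClosure_eq_self.symm
      _ = ((level G 0).extensionProduct (level G 1)).retractClosure :=
        congrArg _ (extensionProduct_isZero_left (level G 1)).symm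
  | succ n =>
    ext X
    constructor
    · rintro ⟨W, A, B, f, g, h, hT, hA, hB, i, p, hip⟩
      exact ⟨W, ⟨A, B, f, g, h, hT, hA, hB⟩, ⟨⟨i, p, hip⟩⟩⟩
    · rintro ⟨W, ⟨A, B, f, g, h, hT, hA, hB⟩, ⟨r⟩⟩
      exact ⟨W, A, B, f, g, h, hT, hA, hB, r.i, r.r, r.retract⟩

instance (G : C) (n : ℕ) : (level G n).IsStableUnderShift ℤ := by
  induction n with
  | zero => exact ⟨fun n => ⟨fun X hX => (shiftFunctor C n).map_isZero hX⟩⟩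
  | succ n ih => rw [level_succ]; infer_instance

theorem isProjectiveClass_level_one [HasCoproducts.{v} C] (G : C) :
    IsProjectiveClass (level G 1) (ghosts G) := by
  refine isProjectiveClass_nullMorphisms (level_one_le ?_) fun X => ?_
  · exact le_projectives_nullMorphisms _ _ (ObjectProperty.le_shiftClosure _ _ (by simp))
  · obtain ⟨κ, k, p, lift⟩ := exists_coproduct_cover (fun i : ULift.{v} ℤ => (G⟦i.down⟧ : C)) X
    refine ⟨_, p, level_one_coproduct _ fun x => (level G 1).le_shift _ G (level_one_self G), ?_⟩
    rintro V ⟨_, n, e, ⟨⟩⟩ a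
    obtain ⟨b, hb⟩ := lift ⟨n⟩ (e.inv ≫ a)
    exact ⟨e.hom ≫ b, by rw [Category.assoc, hb, Iso.hom_inv_id_assoc]⟩

theorem isProjectiveClass_level [HasCoproducts.{v} C] (G : C) (n : ℕ) :
    IsProjectiveClass (level G n) (power (ghosts G) n) := by
  induction n with
  | zero => exact isProjectiveClass_isZero_top
  | succ n ih => exact level_succ G n ▸ ih.comp (isProjectiveClass_level_one G)

theorem power_ghosts_le_ghosts [HasCoproducts.{v} C] {E G : C} {n : ℕ} (hE : level G n E) :
    power (ghosts G) n ≤ ghosts E := by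
  have hG : IsProjectiveClass (level G n) (power (ghosts G) n) := isProjectiveClass_level G n
  have := hG.isStableUnderRetracts
  have shifts_le : (ObjectProperty.singleton E).shiftClosure ℤ ≤ level G n :=
    (ObjectProperty.shiftClosure_le_iff _ _).2 (ObjectProperty.singleton_le_iff.2 hE)
  exact fun X Y f hf V hV a => hG.le_projectives V (shifts_le V hV) f hf a

theorem statement1 [HasCoproducts.{v} C] (E G : C) (n : ℕ) (hE : E ∈ bigLevel G n)
    (j : ℕ) : bigLevel E j ⊆ bigLevel G (j * n) := by
  have ghosts_le : power (ghosts G) (j * n) ≤ power (ghosts E) j :=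
    power_mul_le (power_ghosts_le_ghosts hE) j
  have level_le : level E j ≤ level G (j * n) := by
    rw [← (isProjectiveClass_level E j).projectives_eq,
      ← (isProjectiveClass_level G (j * n)).projectives_eq]
    exact projectives_antitone ghosts_le
  exact fun X hX => level_le X hX

end Stmt
end

section
/- Let 𝒯 be a triangulated category, 𝒮 ⊆ 𝒯 a thick triangulated subcategory, and P an object of 𝒯. Let 𝒯' denote the smallest thick subcategory of 𝒯 containing all objects of the form P ⊕ H with H an object of 𝒮. Then for every object E of 𝒯' there exists an object C of 𝒮 such that E belongs to the smallest thick subcategory of 𝒯 containing P ⊕ C. -/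
/-!
A directed union of thick subcategories is thick, since each closure condition involves at most two
given objects. If `𝒮` is directed under the relation `IsRetract`, then so are the objects `P ⊞ H`
with `H ∈ 𝒮`, and their thick closure is the union of the thick closures of the single objects
`P ⊞ H`. A thick subcategory `𝒮` is directed in this sense because it is closed under biproducts.
-/

open CategoryTheory Limits Pretriangulated

universe v u v₂ u₂

namespace Stmt

variable {C : Type u} [Category.{v} C]

section Thick

variable [HasZeroObject C] [Preadditive C] [HasShift C ℤ]
  [∀ n : ℤ, (shiftFunctor C n).Additive] [Pretriangulated C]

/-- A collection of objects of a pretriangulated category is a thick (triangulated)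
subcategory when it contains the zero objects, and is closed under shifts, cones of
morphisms between its objects (two-out-of-three for distinguished triangles), and
direct summands (retracts). -/
def IsThickSubcat (S : Set C) : Prop :=
  (∀ X : C, IsZero X → X ∈ S) ∧
  (∀ X ∈ S, ∀ n : ℤ, (X⟦n⟧ : C) ∈ S) ∧
  (∀ T : Triangle C, (T ∈ distTriang C) → T.obj₁ ∈ S → T.obj₂ ∈ S → T.obj₃ ∈ S) ∧
  (∀ X Y : C, Y ∈ S → IsRetract X Y → X ∈ S)

/-- The smallest thick subcategory (as a collection of objects) containing `A`. -/
def thickClosure (A : Set C) : Set C := ⋂₀ {S : Set C | A ⊆ S ∧ IsThickSubcat S}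

end Thick

namespace IsRetract

lemma refl (X : C) : IsRetract X X :=
  ⟨𝟙 X, 𝟙 X, Category.comp_id _⟩

section Biproduct

variable [HasZeroMorphisms C] [HasBinaryBiproducts C]

lemma biprod_left (X Y : C) : IsRetract X (X ⊞ Y) :=
  ⟨biprod.inl, biprod.fst, biprod.inl_fst⟩

lemma biprod_right (X Y : C) : IsRetract Y (X ⊞ Y) :=
  ⟨biprod.inr, biprod.snd, biprod.inr_snd⟩

lemma biprod_map {X X' Y Y' : C} (hX : IsRetract X X') (hY : IsRetract Y Y') :
    IsRetract (X ⊞ Y) (X' ⊞ Y') := by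
  obtain ⟨i, p, hip⟩ := hX
  obtain ⟨j, q, hjq⟩ := hY
  refine ⟨biprod.map i j, biprod.map p q, ?_⟩
  ext <;> simp [hip, hjq]

end Biproduct

end IsRetract

section ThickSubcategories

variable [HasZeroObject C] [Preadditive C] [HasShift C ℤ]
  [∀ n : ℤ, (shiftFunctor C n).Additive] [Pretriangulated C]

namespace IsThickSubcat

variable {S : Set C}

lemma mem_of_isZero (hS : IsThickSubcat S) {X : C} (hX : IsZero X) : X ∈ S :=
  hS.1 X hX

lemma nonempty (hS : IsThickSubcat S) : S.Nonempty :=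
  HasZeroObject.zero.imp fun _ => hS.mem_of_isZero

lemma shift_mem (hS : IsThickSubcat S) {X : C} (hX : X ∈ S) (n : ℤ) : (X⟦n⟧ : C) ∈ S :=
  hS.2.1 X hX n

lemma obj₃_mem (hS : IsThickSubcat S) {T : Triangle C} (hT : T ∈ distTriang C)
    (h₁ : T.obj₁ ∈ S) (h₂ : T.obj₂ ∈ S) : T.obj₃ ∈ S :=
  hS.2.2.1 T hT h₁ h₂

lemma mem_of_isRetract (hS : IsThickSubcat S) {X Y : C} (hXY : IsRetract X Y) (hY : Y ∈ S) :
    X ∈ S :=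
  hS.2.2.2 X Y hY hXY

lemma biprod_mem [HasBinaryBiproducts C] (hS : IsThickSubcat S) {X Y : C}
    (hX : X ∈ S) (hY : Y ∈ S) : (X ⊞ Y : C) ∈ S :=
  -- `X ⊞ Y` is the cone of the zero morphism `Y⟦-1⟧ ⟶ X`.
  hS.obj₃_mem (inv_rot_of_distTriang _ (binaryBiproductTriangle_distinguished X Y))
    (hS.shift_mem hY (-1)) hX

lemma directedOn_isRetract [HasBinaryBiproducts C] (hS : IsThickSubcat S) :
    DirectedOn IsRetract S :=
  fun X hX Y hY => ⟨X ⊞ Y, hS.biprod_mem hX hY, .biprod_left X Y, .biprod_right X Y⟩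

lemma sInter {𝒯 : Set (Set C)} (h𝒯 : ∀ T ∈ 𝒯, IsThickSubcat T) : IsThickSubcat (⋂₀ 𝒯) :=
  ⟨fun _ hX T hT => (h𝒯 T hT).mem_of_isZero hX,
    fun _ hX n T hT => (h𝒯 T hT).shift_mem (hX T hT) n,
    fun _ hΔ h₁ h₂ T hT => (h𝒯 T hT).obj₃_mem hΔ (h₁ T hT) (h₂ T hT),
    fun _ _ hY hXY T hT => (h𝒯 T hT).mem_of_isRetract hXY (hY T hT)⟩

lemma iUnion_of_directed {ι : Type*} [Nonempty ι] {T : ι → Set C} (hdir : Directed (· ⊆ ·) T)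
    (hT : ∀ i, IsThickSubcat (T i)) : IsThickSubcat (⋃ i, T i) := by
  simp only [IsThickSubcat, Set.mem_iUnion]
  refine ⟨?zero, ?shift, ?cone, ?retract⟩
  case zero =>
    intro X hX
    exact ⟨Classical.arbitrary ι, (hT _).mem_of_isZero hX⟩
  case shift =>
    rintro X ⟨i, hX⟩ n
    exact ⟨i, (hT i).shift_mem hX n⟩
  case cone =>
    rintro Δ hΔ ⟨i, h₁⟩ ⟨j, h₂⟩
    obtain ⟨k, hik, hjk⟩ := hdir i j
    exact ⟨k, (hT k).obj₃_mem hΔ (hik h₁) (hjk h₂)⟩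
  case retract =>
    rintro X Y ⟨i, hY⟩ hXY
    exact ⟨i, (hT i).mem_of_isRetract hXY hY⟩

end IsThickSubcat

lemma subset_thickClosure (A : Set C) : A ⊆ thickClosure A :=
  Set.subset_sInter fun _ hT => hT.1

lemma mem_thickClosure_singleton_self (X : C) : X ∈ thickClosure {X} :=
  subset_thickClosure _ rfl

lemma thickClosure_subset {A T : Set C} (hA : A ⊆ T) (hT : IsThickSubcat T) :
    thickClosure A ⊆ T :=
  Set.sInter_subset_of_mem ⟨hA, hT⟩

lemma isThickSubcat_thickClosure (A : Set C) : IsThickSubcat (thickClosure A) :=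
  .sInter fun _ hT => hT.2

lemma thickClosure_singleton_subset_of_isRetract {X Y : C} (h : IsRetract X Y) :
    thickClosure {X} ⊆ thickClosure {Y} := by
  have hX : X ∈ thickClosure {Y} :=
    (isThickSubcat_thickClosure _).mem_of_isRetract h (mem_thickClosure_singleton_self Y)
  exact thickClosure_subset (Set.singleton_subset_iff.mpr hX) (isThickSubcat_thickClosure _)

lemma exists_mem_thickClosure_singleton_of_directedOn {A : Set C} (hne : A.Nonempty)
    (hdir : DirectedOn IsRetract A) {E : C} (hE : E ∈ thickClosure A) :
    ∃ X ∈ A, E ∈ thickClosure {X} := by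
  have : Nonempty A := hne.to_subtype
  have hdir' : Directed (· ⊆ ·) fun X : A => thickClosure {(X : C)} :=
    Directed.mono_comp _ (g := fun X => thickClosure {X})
      (fun _ _ => thickClosure_singleton_subset_of_isRetract) hdir.directed_val
  have hthick : IsThickSubcat (⋃ X : A, thickClosure {(X : C)}) :=
    .iUnion_of_directed hdir' fun X => isThickSubcat_thickClosure {(X : C)}
  have hA : A ⊆ ⋃ X : A, thickClosure {(X : C)} := fun X hX =>
    Set.mem_iUnion.mpr ⟨⟨X, hX⟩, mem_thickClosure_singleton_self X⟩
  obtain ⟨⟨X, hX⟩, hEX⟩ := Set.mem_iUnion.mp (thickClosure_subset hA hthick hE)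
  exact ⟨X, hX, hEX⟩

end ThickSubcategories

theorem statement14_general [HasZeroObject C] [Preadditive C] [HasShift C ℤ]
    [∀ n : ℤ, (shiftFunctor C n).Additive] [Pretriangulated C] [HasBinaryBiproducts C]
    (S : Set C) (hne : S.Nonempty) (hdir : DirectedOn IsRetract S) (P : C)
    (E : C) (hE : E ∈ thickClosure ((fun H => (P ⊞ H : C)) '' S)) :
    ∃ Z ∈ S, E ∈ thickClosure {(P ⊞ Z : C)} := by
  have hdirP : DirectedOn IsRetract ((fun H => (P ⊞ H : C)) '' S) :=
    hdir.mono_comp fun _ _ => (IsRetract.refl P).biprod_map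
  obtain ⟨_, ⟨Z, hZ, rfl⟩, hEZ⟩ :=
    exists_mem_thickClosure_singleton_of_directedOn (hne.image _) hdirP hE
  exact ⟨Z, hZ, hEZ⟩

/--
let 𝒮 ⊆ 𝒯 be a thick triangulated subcategory and `P` an object of 𝒯.
If 𝒯' is the smallest thick subcategory of 𝒯 containing all objects `P ⊕ H` with
`H ∈ 𝒮`, then every object `E` of 𝒯' belongs to the smallest thick subcategory of 𝒯
containing `P ⊕ Z` for some object `Z` of 𝒮.
-/
theorem statement14 [HasZeroObject C] [Preadditive C] [HasShift C ℤ]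
    [∀ n : ℤ, (shiftFunctor C n).Additive] [Pretriangulated C] [HasBinaryBiproducts C]
    (S : Set C) (hS : IsThickSubcat S) (P : C)
    (E : C) (hE : E ∈ thickClosure ((fun H => (P ⊞ H : C)) '' S)) :
    ∃ Z ∈ S, E ∈ thickClosure {(P ⊞ Z : C)} :=
  statement14_general S hS.nonempty hS.directedOn_isRetract P E hE

end Stmt
end

section
/- Let R be a commutative Noetherian ring and let l ≥ 0 be a natural number. Let 𝒵 be the set of objects of the derived category D(Mod R) given by the quotient rings R/𝔭, regarded as complexes concentrated in degree 0, where 𝔭 ranges over the prime ideals of R with Krull dimension of R/𝔭 at most l. Then every object E of D(Mod R) whose homology modules are all finitely generated, vanish in all but finitely many degrees, and satisfy that every prime 𝔭 in the support of some homology module of E has Krull dimension of R/𝔭 at most l, belongs to the smallest thick subcategory of D(Mod R) containing 𝒵. (This is the affine case of the paper's Proposition: objects of D^b_coh supported in dimension at most l are finitely built from the structure sheaves of integral closed subschemes of dimension at most l.) -/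
/-!
For a distinguished triangle `τ_{≤ a} E ⟶ E ⟶ τ_{> a} E ⟶` cut at the lowest degree `a` in which `E`
has homology, the first term is `H^a(E)[-a]` and the last one has the remaining homology of `E`.
By induction a bounded complex is thus an iterated extension of shifts of its homology modules. A
finitely generated module over a Noetherian ring is in turn an iterated extension of modules
`R ⧸ 𝔭` with `𝔭` in its support, and a short exact sequence of modules is a distinguished triangle.
-/

open CategoryTheory Limits Pretriangulated

universe v u v₂ u₂

namespace Stmt

variable {C : Type u} [Category.{v} C]

universe w

section Thick

variable [HasZeroObject C] [Preadditive C] [HasShift C ℤ]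
  [∀ n : ℤ, (shiftFunctor C n).Additive] [Pretriangulated C]

lemma IsThickSubcat.isStableUnderRetracts {S : Set C} (hS : IsThickSubcat S) :
    ObjectProperty.IsStableUnderRetracts (fun X : C ↦ X ∈ S) where
  of_retract r hY := hS.2.2.2 _ _ hY ⟨r.i, r.r, r.retract⟩

lemma IsThickSubcat.isTriangulated {S : Set C} (hS : IsThickSubcat S) :
    ObjectProperty.IsTriangulated (fun X : C ↦ X ∈ S) := by
  have := hS.isStableUnderRetracts
  obtain ⟨hzero, hshift, hcone, -⟩ := hS
  have : ObjectProperty.ContainsZero (fun X : C ↦ X ∈ S) :=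
    ⟨_, isZero_zero C, hzero _ (isZero_zero C)⟩
  have : ObjectProperty.IsStableUnderShift (fun X : C ↦ X ∈ S) ℤ :=
    ⟨fun n ↦ ⟨fun X hX ↦ hshift X hX n⟩⟩
  have : ObjectProperty.IsTriangulatedClosed₃ (fun X : C ↦ X ∈ S) := .mk' hcone
  have : ObjectProperty.IsTriangulatedClosed₂ (fun X : C ↦ X ∈ S) := .of_isTriangulatedClosed₃
  constructor

lemma mem_thickClosure {A : Set C} {X : C}
    (h : ∀ P : ObjectProperty C, P.IsTriangulated → P.IsStableUnderRetracts →
      (∀ Y ∈ A, P Y) → P X) :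
    X ∈ thickClosure A :=
  fun S ⟨hAS, hS⟩ ↦ h (· ∈ S) hS.isTriangulated hS.isStableUnderRetracts hAS

lemma thickClosure_mono {A B : Set C} (h : A ⊆ B) : thickClosure A ⊆ thickClosure B :=
  fun _ hX S ⟨hBS, hS⟩ ↦ hX S ⟨h.trans hBS, hS⟩

end Thick

open DerivedCategory

section Abelian

variable {A : Type u} [Category.{v} A] [Abelian A] [HasDerivedCategory.{w} A]

lemma isIso_homologyFunctor_map_truncLTι_app (E : DerivedCategory A) {n i : ℤ} (hi : i < n) :
    IsIso ((homologyFunctor A i).map ((TStructure.t.truncLTι n).app E)) := by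
  have hT := TStructure.t.triangleLTGE_distinguished n E
  have : Mono ((homologyFunctor A i).map ((TStructure.t.truncLTι n).app E)) :=
    (HomologySequence.mono_homologyMap_mor₁_iff _ hT (i - 1) i).2
      ((isZero_of_isGE _ n (i - 1) (by lia)).eq_of_src _ _)
  have : Epi ((homologyFunctor A i).map ((TStructure.t.truncLTι n).app E)) :=
    (HomologySequence.epi_homologyMap_mor₁_iff _ hT i).2
      ((isZero_of_isGE _ n i hi).eq_of_tgt _ _)
  exact isIso_of_mono_of_epi _

lemma isIso_homologyFunctor_map_truncGEπ_app (E : DerivedCategory A) {n i : ℤ} (hi : n ≤ i) :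
    IsIso ((homologyFunctor A i).map ((TStructure.t.truncGEπ n).app E)) := by
  have hT := TStructure.t.triangleLTGE_distinguished n E
  have : Mono ((homologyFunctor A i).map ((TStructure.t.truncGEπ n).app E)) :=
    (HomologySequence.mono_homologyMap_mor₂_iff _ hT i).2
      ((isZero_of_isLE _ (n - 1) i (by lia)).eq_of_src _ _)
  have : Epi ((homologyFunctor A i).map ((TStructure.t.truncGEπ n).app E)) :=
    (HomologySequence.epi_homologyMap_mor₂_iff _ hT i (i + 1)).2
      ((isZero_of_isLE _ (n - 1) (i + 1) (by lia)).eq_of_tgt _ _)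
  exact isIso_of_mono_of_epi _

lemma nonempty_iso_singleFunctor_obj_homology (X : DerivedCategory A) (n : ℤ)
    [X.IsGE n] [X.IsLE n] :
    Nonempty (X ≅ (singleFunctor A n).obj ((homologyFunctor A n).obj X)) := by
  obtain ⟨M, ⟨e⟩⟩ := X.exists_iso_singleFunctor_obj_of_isGE_of_isLE n
  have eM : (homologyFunctor A n).obj X ≅ M :=
    (homologyFunctor A n).mapIso e ≪≫ (singleFunctorCompHomologyFunctorIso A n).app M
  exact ⟨e ≪≫ (singleFunctor A n).mapIso eM.symm⟩

lemma bounded_of_finite_homology {E : DerivedCategory A}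
    (hE : {m : ℤ | ¬ IsZero ((homologyFunctor A m).obj E)}.Finite) :
    TStructure.t.bounded E := by
  obtain ⟨a, ha⟩ := hE.bddBelow
  obtain ⟨b, hb⟩ := hE.bddAbove
  exact ⟨⟨a, (isGE_iff E a).2 fun i hi ↦ not_not.1 fun h ↦ (ha h).not_gt hi⟩,
    ⟨b, (isLE_iff E b).2 fun i hi ↦ not_not.1 fun h ↦ (hb h).not_gt hi⟩⟩

variable (P : ObjectProperty (DerivedCategory A)) [P.IsClosedUnderIsomorphisms]

lemma prop_singleFunctor_obj [P.IsStableUnderShift ℤ] {M : A}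
    (hM : P ((singleFunctor A 0).obj M)) (n : ℤ) : P ((singleFunctor A n).obj M) :=
  P.prop_of_iso (((singleFunctors A).shiftIso (-n) n 0 (by lia)).app M) (P.le_shift (-n) _ hM)

lemma prop_of_isGE_of_isLE_self [P.IsStableUnderShift ℤ] (E : DerivedCategory A) (n : ℤ)
    [E.IsGE n] [E.IsLE n]
    (hE : P ((singleFunctor A 0).obj ((homologyFunctor A n).obj E))) : P E :=
  have ⟨e⟩ := nonempty_iso_singleFunctor_obj_homology E n
  P.prop_of_iso e.symm (prop_singleFunctor_obj P hE n)

lemma prop_singleFunctor_obj_homology_truncGE [P.ContainsZero] {E : DerivedCategory A}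
    (hE : ∀ m : ℤ, P ((singleFunctor A 0).obj ((homologyFunctor A m).obj E))) (n m : ℤ) :
    P ((singleFunctor A 0).obj
      ((homologyFunctor A m).obj ((TStructure.t.truncGE n).obj E))) := by
  rcases lt_or_ge m n with hm | hm
  · exact P.prop_of_isZero ((singleFunctor A 0).map_isZero (isZero_of_isGE _ n m hm))
  · have := isIso_homologyFunctor_map_truncGEπ_app E hm
    exact P.prop_of_iso ((singleFunctor A 0).mapIso
      (asIso ((homologyFunctor A m).map ((TStructure.t.truncGEπ n).app E)))) (hE m)

lemma prop_of_isGE_of_isLE_add [P.IsTriangulated] (k : ℕ) (a : ℤ) (E : DerivedCategory A)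
    [E.IsGE a] [E.IsLE (a + k)]
    (hE : ∀ m : ℤ, P ((singleFunctor A 0).obj ((homologyFunctor A m).obj E))) : P E := by
  induction k generalizing a E with
  | zero =>
    have : E.IsLE a := TStructure.t.isLE_of_le E (a + (0 : ℕ)) a
    exact prop_of_isGE_of_isLE_self P E a (hE a)
  | succ k ih =>
    have : E.IsLE (a + 1 + k) := TStructure.t.isLE_of_le E (a + (k + 1 : ℕ)) (a + 1 + k)
    refine P.ext_of_isTriangulatedClosed₂ _ (TStructure.t.triangleLTGE_distinguished (a + 1) E)
      (prop_of_isGE_of_isLE_self P ((TStructure.t.truncLT (a + 1)).obj E) a ?_)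
      (ih (a + 1) ((TStructure.t.truncGE (a + 1)).obj E)
        (prop_singleFunctor_obj_homology_truncGE P hE (a + 1)))
    have := isIso_homologyFunctor_map_truncLTι_app E (lt_add_one a)
    exact P.prop_of_iso ((singleFunctor A 0).mapIso
      (asIso ((homologyFunctor A a).map ((TStructure.t.truncLTι (a + 1)).app E))).symm) (hE a)

theorem prop_of_bounded_of_homology [P.IsTriangulated] {E : DerivedCategory A}
    (hbdd : TStructure.t.bounded E)
    (hE : ∀ m : ℤ, P ((singleFunctor A 0).obj ((homologyFunctor A m).obj E))) : P E := by
  obtain ⟨⟨a, _⟩, ⟨b, _⟩⟩ := hbdd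
  have : E.IsLE (a + (b - a).toNat) := TStructure.t.isLE_of_le E b _ (by lia)
  exact prop_of_isGE_of_isLE_add P (b - a).toNat a E hE

end Abelian

section Module

variable {R : Type u} [CommRing R]

lemma shortExact_moduleCatMk {M₁ M₂ M₃ : Type v} [AddCommGroup M₁] [AddCommGroup M₂]
    [AddCommGroup M₃] [Module R M₁] [Module R M₂] [Module R M₃] {f : M₁ →ₗ[R] M₂} {g : M₂ →ₗ[R] M₃}
    (hf : Function.Injective f) (hg : Function.Surjective g) (hfg : Function.Exact f g) :
    (ShortComplex.moduleCatMk f g hfg.linearMap_comp_eq_zero).ShortExact where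
  exact := (ShortComplex.ShortExact.moduleCat_exact_iff_function_exact _).2 hfg
  mono_f := (ModuleCat.mono_iff_injective _).2 hf
  epi_g := (ModuleCat.epi_iff_surjective _).2 hg

lemma mem_support_quotient (p : PrimeSpectrum R) : p ∈ Module.support R (R ⧸ p.asIdeal) := by
  rw [Module.support_eq_zeroLocus, Ideal.annihilator_quotient, PrimeSpectrum.mem_zeroLocus,
    SetLike.coe_subset_coe]

theorem prop_singleFunctor_obj_of_finite [IsNoetherianRing R]
    [HasDerivedCategory.{w} (ModuleCat.{u} R)]
    (P : ObjectProperty (DerivedCategory (ModuleCat.{u} R)))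
    [P.ContainsZero] [P.IsTriangulatedClosed₂] [P.IsClosedUnderIsomorphisms]
    {M : Type u} [AddCommGroup M] [Module R M] (hM : Module.Finite R M)
    (hsupp : ∀ p ∈ Module.support R M,
      P ((singleFunctor (ModuleCat.{u} R) 0).obj (ModuleCat.of R (R ⧸ p.asIdeal)))) :
    P ((singleFunctor (ModuleCat.{u} R) 0).obj (ModuleCat.of R M)) := by
  revert hsupp
  induction hM using IsNoetherianRing.induction_on_isQuotientEquivQuotientPrime R with
  | subsingleton N =>
    exact fun _ ↦ P.prop_of_isZero (Functor.map_isZero _ (ModuleCat.isZero_of_subsingleton _))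
  | quotient N p e =>
    exact fun hsupp ↦ P.prop_of_iso ((singleFunctor (ModuleCat.{u} R) 0).mapIso e.toModuleIso.symm)
      (hsupp p (e.support_eq ▸ mem_support_quotient p))
  | exact N₁ N₂ N₃ f g hf hg hfg ih₁ ih₃ =>
    intro hsupp
    rw [Module.support_of_exact hfg hf hg] at hsupp
    exact P.ext_of_isTriangulatedClosed₂ _
      (shortExact_moduleCatMk hf hg hfg).singleTriangle_distinguished
      (ih₁ fun p hp ↦ hsupp p (.inl hp)) (ih₃ fun p hp ↦ hsupp p (.inr hp))

theorem statement15_general [IsNoetherianRing R] [HasDerivedCategory.{w} (ModuleCat.{u} R)]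
    (E : DerivedCategory (ModuleCat.{u} R))
    (hfg : ∀ m : ℤ, Module.Finite R ((homologyFunctor (ModuleCat.{u} R) m).obj E))
    (hbdd : {m : ℤ | ¬ IsZero ((homologyFunctor (ModuleCat.{u} R) m).obj E)}.Finite) :
    E ∈ thickClosure {X | ∃ (m : ℤ) (p : PrimeSpectrum R),
      p ∈ Module.support R ((homologyFunctor (ModuleCat.{u} R) m).obj E) ∧
      X = (singleFunctor (ModuleCat.{u} R) 0).obj (ModuleCat.of R (R ⧸ p.asIdeal))} :=
  mem_thickClosure fun P _ _ hP ↦ prop_of_bounded_of_homology P (bounded_of_finite_homology hbdd)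
    fun m ↦ prop_singleFunctor_obj_of_finite P (hfg m) fun p hp ↦ hP _ ⟨m, p, hp, rfl⟩

end Module

/--
let `R` be a commutative Noetherian ring and `l ≥ 0`. Let `𝒵` be the set
of objects of `D(Mod R)` of the form `R ⧸ 𝔭` (in degree `0`) for `𝔭` prime with
`dim (R ⧸ 𝔭) ≤ l`. Then every object `E` of `D(Mod R)` with bounded finitely generated
homology such that every prime in the support of some homology module of `E` satisfies
`dim (R ⧸ 𝔭) ≤ l` belongs to the smallest thick subcategory containing `𝒵`.
-/
theorem statement15 (R : Type u) [CommRing R] [IsNoetherianRing R]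
    [HasDerivedCategory (ModuleCat.{u} R)] (l : ℕ)
    (Z : Set (DerivedCategory (ModuleCat.{u} R)))
    (hZ : Z = {X | ∃ (p : Ideal R), p.IsPrime ∧
      ringKrullDim (R ⧸ p) ≤ (l : WithBot (WithTop ℕ)) ∧
      X = (DerivedCategory.singleFunctor (ModuleCat.{u} R) 0).obj (ModuleCat.of R (R ⧸ p))})
    (E : DerivedCategory (ModuleCat.{u} R))
    (hfg : ∀ m : ℤ,
      Module.Finite R ((DerivedCategory.homologyFunctor (ModuleCat.{u} R) m).obj E))
    (hbdd : {m : ℤ |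
      ¬ IsZero ((DerivedCategory.homologyFunctor (ModuleCat.{u} R) m).obj E)}.Finite)
    (hsupp : ∀ (m : ℤ) (p : PrimeSpectrum R),
      p ∈ Module.support R ((DerivedCategory.homologyFunctor (ModuleCat.{u} R) m).obj E) →
      ringKrullDim (R ⧸ p.asIdeal) ≤ (l : WithBot (WithTop ℕ))) :
    E ∈ thickClosure Z := by
  subst hZ
  refine thickClosure_mono ?_ (statement15_general E hfg hbdd)
  rintro X ⟨m, p, hp, rfl⟩
  exact ⟨p.asIdeal, p.isPrime, hsupp m p hp, rfl⟩

end Stmt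
end
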